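/- Let g : ℝ → ℝ be operator monotone decreasing on (0,∞), and let A, B be positive definite complex matrices with s·A ≤ B ≤ t·A for some scalars 0 < s ≤ t with s·t ≥ 1. Then (2/(√s+√t))·g(A ♯ B) ≤ (g(A) + g(B))/2. -/

import Mathlib

open Matrix ComplexOrder

/-- Loewner order: `A ≤ B` iff `B - A` is positive semidefinite. -/
def LoewnerLE {n : Type} [Fintype n] (A B : Matrix n n ℂ) : Prop := (B - A).PosSemidef

/-- The positive square root of a (Hermitian) matrix, via the continuous functional calculus. -/
noncomputable def msqrt {n : Type} [Fintype n] [DecidableEq n] (A : Matrix n n ℂ) :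
    Matrix n n ℂ := cfc Real.sqrt A

/-- The arithmetic mean `A ∇ B = (A + B)/2`. -/
noncomputable def amean {n : Type} [Fintype n] [DecidableEq n] (A B : Matrix n n ℂ) :
    Matrix n n ℂ := (2 : ℝ)⁻¹ • (A + B)

/-- The harmonic mean `A ! B = ((A⁻¹ + B⁻¹)/2)⁻¹`. -/
noncomputable def hmean {n : Type} [Fintype n] [DecidableEq n] (A B : Matrix n n ℂ) :
    Matrix n n ℂ := ((2 : ℝ)⁻¹ • (A⁻¹ + B⁻¹))⁻¹

/-- The geometric mean `A ♯ B = A^(1/2) (A^(-1/2) B A^(-1/2))^(1/2) A^(1/2)`. -/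
noncomputable def gmean {n : Type} [Fintype n] [DecidableEq n] (A B : Matrix n n ℂ) :
    Matrix n n ℂ := msqrt A * msqrt ((msqrt A)⁻¹ * B * (msqrt A)⁻¹) * msqrt A

/-- `f : ℝ → ℝ` is operator monotone on `[0,∞)`: it is continuous and nonnegative on `[0,∞)`
and monotone on positive-semidefinite complex matrices of every finite size, with `f` applied
via the continuous functional calculus. -/
def OpMonotone (f : ℝ → ℝ) : Prop :=
  ContinuousOn f (Set.Ici 0) ∧ (∀ x : ℝ, 0 ≤ x → 0 ≤ f x) ∧
    ∀ (k : Type) [Fintype k] [DecidableEq k] (X Y : Matrix k k ℂ),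
      X.PosSemidef → LoewnerLE X Y → LoewnerLE (cfc f X) (cfc f Y)

/-- `g : ℝ → ℝ` is operator monotone decreasing on `(0,∞)`: it is continuous and nonnegative on
`(0,∞)` and antitone on positive-definite complex matrices of every finite size, with `g` applied
via the continuous functional calculus. -/
def OpAntitone (g : ℝ → ℝ) : Prop :=
  ContinuousOn g (Set.Ioi 0) ∧ (∀ x : ℝ, 0 < x → 0 ≤ g x) ∧
    ∀ (k : Type) [Fintype k] [DecidableEq k] (X Y : Matrix k k ℂ),
      X.PosDef → Y.PosDef → LoewnerLE X Y → LoewnerLE (cfc g Y) (cfc g X)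

/-!
Since `s * t ≥ 1`, every `x ∈ [s, t]` satisfies `1 + x ≤ (√s + √t) * √x`; conjugating by `A^(1/2)`,
this becomes `(A + B) / 2 ≤ K • (A ♯ B)` with `K = (√s + √t) / 2 ≥ 1`.

The remaining ingredient is a Jensen-type inequality: if `T` is a contraction and `T* X T ≤ G`,
then `T g(G) T* ≤ g(X)`. Dilate `T` to an isometry `E` and let `J` be the coordinate isometry with
`J* E = T`. Extending `X` by a small scalar off the range of `J` and `G` by a large scalar off the
range of `E` turns the hypothesis into an inequality between two positive definite matrices, to
which antitonicity applies; since `g ≥ 0`, compressing by `J` gives the claim. Applied to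
`X = A ⊕ B`, `G = A ♯ B` and `T = (2 * K)^(-1/2) (1, 1)`, it yields the theorem.
-/

open scoped MatrixOrder

section Order

lemma le_corner_add_corner {R : Type*} [Ring R] [StarRing R] [PartialOrder R] [StarOrderedRing R]
    [Algebra ℝ R] [StarModule ℝ R] [PosSMulMono ℝ R] {p h : R} (hp : IsStarProjection p)
    (hh : IsSelfAdjoint h) {ε : ℝ} (hε : 0 < ε) :
    h ≤ p * h * p + ε • p + (1 - p) * (h + ε⁻¹ • (h * h)) * (1 - p) := by
  have hsquare : p * h * p + ε • p + (1 - p) * (h + ε⁻¹ • (h * h)) * (1 - p) - h =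
      ε⁻¹ • (star (ε • p - h * (1 - p)) * (ε • p - h * (1 - p))) := by
    simp only [star_sub, star_mul, star_smul, star_trivial, hp.isSelfAdjoint.star_eq,
      hh.star_eq, mul_add, add_mul, mul_sub, sub_mul, smul_mul_assoc, mul_smul_comm, mul_one,
      one_mul, ← mul_assoc, hp.isIdempotentElem.eq]
    match_scalars <;> field_simp <;> ring
  rw [← sub_nonneg, hsquare]
  exact smul_nonneg (inv_nonneg.2 hε.le) (star_mul_self_nonneg _)

variable {𝕜 m n : Type*} [RCLike 𝕜]

lemma conjTranspose_mul_mul_le [Fintype m] [Finite n] {X Y : Matrix m m 𝕜}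
    (h : X ≤ Y) (C : Matrix m n 𝕜) : Cᴴ * X * C ≤ Cᴴ * Y * C := by
  have := (Matrix.le_iff.1 h).conjTranspose_mul_mul_same C
  rwa [Matrix.mul_sub, Matrix.sub_mul] at this

lemma conjTranspose_smul_mul_mul_smul [Fintype m] (r : ℝ) (T : Matrix m n 𝕜) (X : Matrix m m 𝕜) :
    (r • T)ᴴ * X * (r • T) = (r * r) • (Tᴴ * X * T) := by
  simp [conjTranspose_smul, smul_smul]

lemma exists_le_smul_one [Finite n] [DecidableEq n] {X : Matrix n n 𝕜} (hX : X.IsHermitian) :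
    ∃ c : ℝ, 0 < c ∧ X ≤ c • 1 := by
  cases nonempty_fintype n
  obtain ⟨b, hb⟩ := X.finite_real_spectrum.bddAbove
  refine ⟨max b 1, by positivity, ?_⟩
  rw [← Algebra.algebraMap_eq_smul_one, le_algebraMap_iff_spectrum_le hX.isSelfAdjoint]
  exact fun x hx => (hb hx).trans (le_max_left _ _)

lemma posDef_iff_exists_smul_one_le [Finite n] [DecidableEq n] {X : Matrix n n 𝕜} :
    X.PosDef ↔ ∃ c : ℝ, 0 < c ∧ c • 1 ≤ X := by
  cases nonempty_fintype n
  constructor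
  · intro hX
    cases isEmpty_or_nonempty n
    · exact ⟨1, one_pos, (Subsingleton.elim _ _).le⟩
    · simpa only [Algebra.algebraMap_eq_smul_one] using
        (CFC.exists_pos_algebraMap_le_iff hX.1.isSelfAdjoint).2 fun x hx =>
          hX.isStrictlyPositive.spectrum_pos hx
  · rintro ⟨c, hc, hcX⟩
    simpa using (Matrix.PosDef.one.smul hc).add_posSemidef (Matrix.le_iff.1 hcX)

lemma posDef_fromBlocks_zero [Finite m] [Finite n] {X : Matrix m m 𝕜} {Y : Matrix n n 𝕜}
    (hX : X.PosDef) (hY : Y.PosDef) : (fromBlocks X 0 0 Y).PosDef := by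
  classical
  cases nonempty_fintype m
  cases nonempty_fintype n
  have := hX.isUnit.invertible
  have hpsd : (fromBlocks X 0 0 Y).PosSemidef := by
    simpa using (Matrix.PosDef.fromBlocks₁₁ 0 Y hX).2 (by simpa using hY.posSemidef)
  exact hpsd.posDef_iff_isUnit.2 (Matrix.isUnit_fromBlocks_zero₁₂.2 ⟨hX.isUnit, hY.isUnit⟩)

end Order

section FunctionalCalculus

variable {𝕜 m n : Type*} [RCLike 𝕜] [Fintype m] [Fintype n] [DecidableEq m] [DecidableEq n]

lemma aeval_mul_eq_mul_aeval {X : Matrix m m 𝕜} {Y : Matrix n n 𝕜} {E : Matrix m n 𝕜}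
    (h : X * E = E * Y) (p : Polynomial ℝ) :
    Polynomial.aeval X p * E = E * Polynomial.aeval Y p := by
  induction p using Polynomial.induction_on' with
  | add p q hp hq => rw [map_add, map_add, Matrix.add_mul, Matrix.mul_add, hp, hq]
  | monomial k r =>
    have hpow : X ^ k * E = E * Y ^ k := by
      induction k with
      | zero => simp
      | succ k ih =>
        rw [pow_succ, Matrix.mul_assoc, h, ← Matrix.mul_assoc, ih, Matrix.mul_assoc, ← pow_succ]
    simp only [Polynomial.aeval_monomial, ← Algebra.smul_def, Matrix.smul_mul, Matrix.mul_smul,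
      hpow]

-- On finitely many spectral values, every function agrees with a polynomial.
lemma cfc_mul_eq_mul_cfc (g : ℝ → ℝ) {X : Matrix m m 𝕜} {Y : Matrix n n 𝕜} {E : Matrix m n 𝕜}
    (hX : X.IsHermitian) (hY : Y.IsHermitian) (h : X * E = E * Y) :
    cfc g X * E = E * cfc g Y := by
  set nodes : Finset ℝ := X.finite_real_spectrum.toFinset ∪ Y.finite_real_spectrum.toFinset
    with hnodes
  set p : Polynomial ℝ := Lagrange.interpolate nodes id g
  have hp {x : ℝ} (hx : x ∈ nodes) : g x = p.eval x :=
    (Lagrange.eval_interpolate_at_node (v := id) g (Set.injOn_id _) hx).symm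
  have hgX : cfc g X = Polynomial.aeval X p := by
    rw [← cfc_polynomial (R := ℝ) p X hX.isSelfAdjoint]
    exact cfc_congr fun x hx => hp (by simp [hnodes, hx])
  have hgY : cfc g Y = Polynomial.aeval Y p := by
    rw [← cfc_polynomial (R := ℝ) p Y hY.isSelfAdjoint]
    exact cfc_congr fun x hx => hp (by simp [hnodes, hx])
  rw [hgX, hgY, aeval_mul_eq_mul_aeval h]

lemma cfc_fromBlocks_zero (g : ℝ → ℝ) {X : Matrix m m 𝕜} {Y : Matrix n n 𝕜}
    (hX : X.IsHermitian) (hY : Y.IsHermitian) :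
    cfc g (fromBlocks X 0 0 Y) = fromBlocks (cfc g X) 0 0 (cfc g Y) := by
  have hXY : (fromBlocks X 0 0 Y).IsHermitian := hX.fromBlocks (by simp) hY
  have hleft : cfc g (fromBlocks X 0 0 Y) * (fromRows 1 0 : Matrix (m ⊕ n) m 𝕜) =
      fromRows (cfc g X) 0 := by
    rw [cfc_mul_eq_mul_cfc g hXY hX (by simp [fromBlocks_mul_fromRows, fromRows_mul])]
    simp [fromRows_mul]
  have hright : cfc g (fromBlocks X 0 0 Y) * (fromRows 0 1 : Matrix (m ⊕ n) n 𝕜) =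
      fromRows 0 (cfc g Y) := by
    rw [cfc_mul_eq_mul_cfc g hXY hY (by simp [fromBlocks_mul_fromRows, fromRows_mul])]
    simp [fromRows_mul]
  calc cfc g (fromBlocks X 0 0 Y) = cfc g (fromBlocks X 0 0 Y) * fromBlocks 1 0 0 1 := by
        rw [fromBlocks_one, Matrix.mul_one]
    _ = fromBlocks (cfc g X) 0 0 (cfc g Y) := by
        rw [← fromCols_fromRows_eq_fromBlocks 1, mul_fromCols, hleft, hright,
          fromCols_fromRows_eq_fromBlocks]

end FunctionalCalculus

section ExtendByScalar

variable {𝕜 m n : Type*} [RCLike 𝕜] [Fintype n]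

lemma isStarProjection_mul_conjTranspose [Fintype m] [DecidableEq n] {E : Matrix m n 𝕜}
    (hE : Eᴴ * E = 1) : IsStarProjection (E * Eᴴ) where
  isIdempotentElem := by
    rw [IsIdempotentElem, Matrix.mul_assoc, ← Matrix.mul_assoc Eᴴ, hE, Matrix.one_mul]
  isSelfAdjoint := isHermitian_mul_conjTranspose_self E

variable [DecidableEq m]

/-- For an isometry `E`, the operator that acts as `G` on the range of `E` and as the scalar `c`
on its orthogonal complement. -/
def extendByScalar (E : Matrix m n 𝕜) (G : Matrix n n 𝕜) (c : ℝ) : Matrix m m 𝕜 :=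
  E * G * Eᴴ + c • (1 - E * Eᴴ)

lemma isHermitian_extendByScalar (E : Matrix m n 𝕜) {G : Matrix n n 𝕜} (hG : G.IsHermitian)
    (c : ℝ) : (extendByScalar E G c).IsHermitian := by
  simp [extendByScalar, Matrix.IsHermitian, Matrix.mul_assoc, hG.eq]

lemma extendByScalar_smul_one [DecidableEq n] (E : Matrix m n 𝕜) (c : ℝ) :
    extendByScalar E (c • 1) c = c • 1 := by
  simp [extendByScalar, smul_sub]

variable [Fintype m] [DecidableEq n] {E : Matrix m n 𝕜}

lemma extendByScalar_mul (hE : Eᴴ * E = 1) (G : Matrix n n 𝕜) (c : ℝ) :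
    extendByScalar E G c * E = E * G := by
  simp [extendByScalar, Matrix.add_mul, Matrix.sub_mul, Matrix.mul_assoc, hE]

lemma extendByScalar_mul_one_sub (hE : Eᴴ * E = 1) (G : Matrix n n 𝕜) (c : ℝ) :
    extendByScalar E G c * (1 - E * Eᴴ) = c • (1 - E * Eᴴ) := by
  rw [Matrix.mul_sub, Matrix.mul_one, ← Matrix.mul_assoc, extendByScalar_mul hE, extendByScalar,
    add_sub_cancel_left]

lemma conjTranspose_mul_extendByScalar_mul (hE : Eᴴ * E = 1) (G : Matrix n n 𝕜) (c : ℝ) :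
    Eᴴ * extendByScalar E G c * E = G := by
  rw [Matrix.mul_assoc, extendByScalar_mul hE, ← Matrix.mul_assoc, hE, Matrix.one_mul]

lemma cfc_extendByScalar (g : ℝ → ℝ) (hE : Eᴴ * E = 1) {G : Matrix n n 𝕜} (hG : G.IsHermitian)
    (c : ℝ) : cfc g (extendByScalar E G c) = extendByScalar E (cfc g G) (g c) := by
  have hext := isHermitian_extendByScalar E hG c
  have hrange : cfc g (extendByScalar E G c) * E = E * cfc g G :=
    cfc_mul_eq_mul_cfc g hext hG (extendByScalar_mul hE G c)
  have hcompl : cfc g (extendByScalar E G c) * (1 - E * Eᴴ) = g c • (1 - E * Eᴴ) := by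
    have hscalar : (algebraMap ℝ (Matrix m m 𝕜) c).IsHermitian :=
      IsSelfAdjoint.algebraMap _ (.all c)
    have hcomm : extendByScalar E G c * (1 - E * Eᴴ) = (1 - E * Eᴴ) * algebraMap ℝ _ c := by
      rw [extendByScalar_mul_one_sub hE, ← Algebra.commutes, ← Algebra.smul_def]
    rw [cfc_mul_eq_mul_cfc g hext hscalar hcomm, cfc_algebraMap, ← Algebra.commutes,
      ← Algebra.smul_def]
  calc cfc g (extendByScalar E G c)
      = cfc g (extendByScalar E G c) * E * Eᴴ
          + cfc g (extendByScalar E G c) * (1 - E * Eᴴ) := by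
        rw [Matrix.mul_assoc, ← Matrix.mul_add, add_sub_cancel, Matrix.mul_one]
    _ = extendByScalar E (cfc g G) (g c) := by rw [hrange, hcompl, extendByScalar]

lemma extendByScalar_le (hE : Eᴴ * E = 1) {G H : Matrix n n 𝕜} (hGH : G ≤ H) {c d : ℝ}
    (hcd : c ≤ d) : extendByScalar E G c ≤ extendByScalar E H d := by
  refine add_le_add ?_ (smul_le_smul_of_nonneg_right hcd ?_)
  · simpa using conjTranspose_mul_mul_le hGH Eᴴ
  · exact (isStarProjection_mul_conjTranspose hE).one_sub_nonneg

lemma mul_mul_conjTranspose_le_extendByScalar (hE : Eᴴ * E = 1) (G : Matrix n n 𝕜) {c : ℝ}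
    (hc : 0 ≤ c) : E * G * Eᴴ ≤ extendByScalar E G c :=
  le_add_of_nonneg_right
    (smul_nonneg hc (isStarProjection_mul_conjTranspose hE).one_sub_nonneg)

lemma posDef_extendByScalar (hE : Eᴴ * E = 1) {G : Matrix n n 𝕜} (hG : G.PosDef) {c : ℝ}
    (hc : 0 < c) : (extendByScalar E G c).PosDef := by
  obtain ⟨b, hb, hbG⟩ := posDef_iff_exists_smul_one_le.1 hG
  refine posDef_iff_exists_smul_one_le.2 ⟨min b c, lt_min hb hc, ?_⟩
  rw [← extendByScalar_smul_one E]
  refine extendByScalar_le hE (le_trans ?_ hbG) (min_le_right b c)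
  exact smul_le_smul_of_nonneg_right (min_le_left b c) zero_le_one

lemma exists_le_extendByScalar (hE : Eᴴ * E = 1) {G : Matrix n n 𝕜} {H : Matrix m m 𝕜}
    (hH : H.IsHermitian) (hG : (G - Eᴴ * H * E).PosDef) :
    ∃ c : ℝ, 0 < c ∧ H ≤ extendByScalar E G c := by
  have hP := isStarProjection_mul_conjTranspose hE
  obtain ⟨ε, hε, hεG⟩ := posDef_iff_exists_smul_one_le.1 hG
  obtain ⟨c, hc, hbound⟩ : ∃ c : ℝ, 0 < c ∧ H + ε⁻¹ • (H * H) ≤ c • 1 := by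
    refine exists_le_smul_one (hH.add (.smul ?_ (.all _)))
    simpa only [hH.eq] using isHermitian_conjTranspose_mul_self H
  refine ⟨c, hc, (le_corner_add_corner hP hH.isSelfAdjoint hε).trans (add_le_add ?_ ?_)⟩
  · have := conjTranspose_mul_mul_le (add_le_of_le_sub_left hεG) Eᴴ
    simpa only [Matrix.mul_add, Matrix.add_mul, Matrix.mul_smul, Matrix.smul_mul, Matrix.mul_one,
      conjTranspose_conjTranspose, Matrix.mul_assoc] using this
  · have := hP.one_sub.isSelfAdjoint.conjugate_le_conjugate hbound
    simpa only [mul_smul_comm, smul_mul_assoc, mul_one, hP.one_sub.isIdempotentElem.eq] using this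

end ExtendByScalar

namespace OpAntitone

variable {g : ℝ → ℝ} {m n : Type} [Fintype m] [Fintype n] [DecidableEq m] [DecidableEq n]

lemma cfc_le_cfc (hg : OpAntitone g) {X Y : Matrix n n ℂ} (hX : X.PosDef) (hY : Y.PosDef)
    (h : X ≤ Y) : cfc g Y ≤ cfc g X :=
  hg.2.2 n X Y hX hY h

lemma conj_cfc_le_of_isometry (hg : OpAntitone g) {l : Type} [Fintype l] [DecidableEq l]
    {E : Matrix l n ℂ} {J : Matrix l m ℂ} (hE : Eᴴ * E = 1) (hJ : Jᴴ * J = 1)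
    {X : Matrix m m ℂ} {G : Matrix n n ℂ} (hX : X.PosDef) (hG : G.PosDef) {ε : ℝ} (hε : 0 < ε)
    (hlt : (G - Eᴴ * extendByScalar J X ε * E).PosDef) :
    (Jᴴ * E) * cfc g G * (Jᴴ * E)ᴴ ≤ cfc g X := by
  have hXε := posDef_extendByScalar hJ hX hε
  obtain ⟨c, hc, hle⟩ := exists_le_extendByScalar hE hXε.isHermitian hlt
  have hext : E * cfc g G * Eᴴ ≤ extendByScalar J (cfc g X) (g ε) :=
    calc E * cfc g G * Eᴴ ≤ extendByScalar E (cfc g G) (g c) :=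
          mul_mul_conjTranspose_le_extendByScalar hE _ (hg.2.1 c hc)
      _ = cfc g (extendByScalar E G c) := (cfc_extendByScalar g hE hG.isHermitian c).symm
      _ ≤ cfc g (extendByScalar J X ε) := hg.cfc_le_cfc hXε (posDef_extendByScalar hE hG hc) hle
      _ = extendByScalar J (cfc g X) (g ε) := cfc_extendByScalar g hJ hX.isHermitian ε
  have hcompress := conjTranspose_mul_mul_le hext J
  rw [conjTranspose_mul_extendByScalar_mul hJ] at hcompress
  simpa only [conjTranspose_mul, conjTranspose_conjTranspose, Matrix.mul_assoc] using hcompress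

lemma conj_cfc_le_of_lt (hg : OpAntitone g) {X : Matrix m m ℂ} {G : Matrix n n ℂ}
    {T : Matrix m n ℂ} (hX : X.PosDef) (hG : G.PosDef) (hT : Tᴴ * T ≤ 1)
    (hlt : (G - Tᴴ * X * T).PosDef) :
    T * cfc g G * Tᴴ ≤ cfc g X := by
  obtain ⟨D, hD⟩ := CStarAlgebra.nonneg_iff_eq_star_mul_self.1 (sub_nonneg.2 hT)
  obtain ⟨ε, hε, hεlt⟩ := posDef_iff_exists_smul_one_le.1 hlt
  set E : Matrix (m ⊕ n) n ℂ := fromRows T D with hE_def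
  set J : Matrix (m ⊕ n) m ℂ := fromRows 1 0 with hJ_def
  have hE : Eᴴ * E = 1 := by
    rw [hE_def, conjTranspose_fromRows_eq_fromCols_conjTranspose, fromCols_mul_fromRows,
      ← star_eq_conjTranspose D, ← hD, add_sub_cancel]
  have hJ : Jᴴ * J = 1 := by
    simp [hJ_def, conjTranspose_fromRows_eq_fromCols_conjTranspose, fromCols_mul_fromRows]
  have hJE : Jᴴ * E = T := by
    simp [hE_def, hJ_def, conjTranspose_fromRows_eq_fromCols_conjTranspose, fromCols_mul_fromRows]
  have hEJ : Eᴴ * J = Tᴴ := by rw [← hJE]; simp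
  have hcompress : Eᴴ * extendByScalar J X (ε / 2) * E = Tᴴ * X * T + (ε / 2) • (1 - Tᴴ * T) := by
    calc Eᴴ * extendByScalar J X (ε / 2) * E
        = (Eᴴ * J) * X * (Jᴴ * E) + (ε / 2) • (Eᴴ * E - (Eᴴ * J) * (Jᴴ * E)) := by
          simp [extendByScalar, Matrix.mul_add, Matrix.add_mul, Matrix.mul_sub, Matrix.sub_mul,
            Matrix.mul_assoc]
      _ = Tᴴ * X * T + (ε / 2) • (1 - Tᴴ * T) := by rw [hE, hEJ, hJE]
  rw [← hJE]
  refine hg.conj_cfc_le_of_isometry hE hJ hX hG (half_pos hε) ?_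
  refine posDef_iff_exists_smul_one_le.2 ⟨ε / 2, half_pos hε, ?_⟩
  have hTT : 0 ≤ (ε / 2) • (Tᴴ * T) :=
    smul_nonneg (half_pos hε).le (posSemidef_conjTranspose_mul_self T).nonneg
  calc (ε / 2) • 1 = ε • 1 - (ε / 2) • (1 : Matrix n n ℂ) := by module
    _ ≤ (G - Tᴴ * X * T) - (ε / 2) • 1 + (ε / 2) • (Tᴴ * T) :=
      le_add_of_le_of_nonneg (sub_le_sub_right hεlt _) hTT
    _ = G - Eᴴ * extendByScalar J X (ε / 2) * E := by rw [hcompress]; module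

open scoped Matrix.Norms.L2Operator in
lemma conj_cfc_le (hg : OpAntitone g) {X : Matrix m m ℂ} {G : Matrix n n ℂ}
    {T : Matrix m n ℂ} (hX : X.PosDef) (hG : G.PosDef) (hT : Tᴴ * T ≤ 1)
    (hle : Tᴴ * X * T ≤ G) : T * cfc g G * Tᴴ ≤ cfc g X := by
  have hscaled {r : ℝ} (hr : r ∈ Set.Ioo 0 1) : (r * r) • (T * cfc g G * Tᴴ) ≤ cfc g X := by
    have hr1 : r * r < 1 := mul_lt_one_of_nonneg_of_lt_one_left hr.1.le hr.2 hr.2.le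
    have hrT : (r • T)ᴴ * (r • T) ≤ 1 := by
      rw [← Matrix.mul_one (r • T)ᴴ, conjTranspose_smul_mul_mul_smul, Matrix.mul_one]
      exact (smul_le_smul_of_nonneg_left hT (mul_self_nonneg r)).trans
        (smul_le_of_le_one_left zero_le_one hr1.le)
    have hlt : (G - (r • T)ᴴ * X * (r • T)).PosDef := by
      rw [conjTranspose_smul_mul_mul_smul]
      have hgap : (G - (r * r) • G).PosDef := by
        simpa [sub_smul] using hG.smul (sub_pos.2 hr1)
      simpa using hgap.add_posSemidef (smul_le_smul_of_nonneg_left hle (mul_self_nonneg r))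
    simpa [conjTranspose_smul, smul_smul] using hg.conj_cfc_le_of_lt hX hG hrT hlt
  have hlim : Filter.Tendsto (fun r : ℝ => (r * r) • (T * cfc g G * Tᴴ)) (nhdsWithin 1 (Set.Iio 1))
      (nhds (T * cfc g G * Tᴴ)) :=
    tendsto_nhdsWithin_of_tendsto_nhds (Continuous.tendsto' (by fun_prop) _ _ (by simp))
  refine le_of_tendsto hlim ?_
  filter_upwards [Ioo_mem_nhdsLT one_pos] with r hr using hscaled hr

lemma inv_smul_cfc_le_amean (hg : OpAntitone g) {A B G : Matrix n n ℂ} (hA : A.PosDef)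
    (hB : B.PosDef) (hG : G.PosDef) {K : ℝ} (hK : 1 ≤ K) (hle : amean A B ≤ K • G) :
    K⁻¹ • cfc g G ≤ amean (cfc g A) (cfc g B) := by
  have hK0 : 0 < K := one_pos.trans_le hK
  set F : Matrix (n ⊕ n) n ℂ := fromRows 1 1
  have hF (X Y : Matrix n n ℂ) : Fᴴ * fromBlocks X 0 0 Y * F = X + Y := by
    simp [F, conjTranspose_fromRows_eq_fromCols_conjTranspose, fromCols_mul_fromBlocks,
      fromCols_mul_fromRows]
  have hFF : Fᴴ * F = (2 : ℝ) • 1 := by simpa [two_smul] using hF 1 1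
  set c := √(2⁻¹ * K⁻¹)
  have hc : c * c = K⁻¹ * 2⁻¹ := by rw [mul_comm K⁻¹, Real.mul_self_sqrt (by positivity)]
  have hcF : (c • F)ᴴ * (c • F) ≤ 1 := by
    rw [← Matrix.mul_one (c • F)ᴴ, conjTranspose_smul_mul_mul_smul, Matrix.mul_one, hFF, hc,
      smul_smul, inv_mul_cancel_right₀ two_ne_zero]
    exact smul_le_of_le_one_left zero_le_one (inv_le_one_of_one_le₀ hK)
  have hcX : (c • F)ᴴ * fromBlocks A 0 0 B * (c • F) ≤ G := by
    rw [conjTranspose_smul_mul_mul_smul, hF, hc, ← smul_smul]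
    exact (inv_smul_le_iff_of_pos hK0).2 hle
  have h := conjTranspose_mul_mul_le (hg.conj_cfc_le (posDef_fromBlocks_zero hA hB) hG hcF hcX) F
  rw [cfc_fromBlocks_zero g hA.isHermitian hB.isHermitian, hF] at h
  have hcompress : Fᴴ * (c • F * cfc g G * (c • F)ᴴ) * F = (2 : ℝ) • K⁻¹ • cfc g G := by
    calc Fᴴ * (c • F * cfc g G * (c • F)ᴴ) * F
        = (c * c) • ((Fᴴ * F) * cfc g G * (Fᴴ * F)) := by
          simp [conjTranspose_smul, smul_smul, Matrix.mul_assoc]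
      _ = (2 : ℝ) • K⁻¹ • cfc g G := by
          rw [hFF, hc]
          simp only [smul_one_mul, mul_smul_one, smul_smul]
          congr 1
          ring
  rw [hcompress] at h
  exact (le_inv_smul_iff_of_pos two_pos).2 h

end OpAntitone

section GeometricMean

variable {n : Type} [Fintype n] [DecidableEq n]

lemma msqrt_eq_sqrt {A : Matrix n n ℂ} (hA : A.PosSemidef) : msqrt A = CFC.sqrt A := by
  rw [msqrt, ← cfcₙ_eq_cfc, CFC.sqrt_eq_real_sqrt A hA.nonneg]

lemma msqrt_mul_msqrt {A : Matrix n n ℂ} (hA : A.PosSemidef) : msqrt A * msqrt A = A := by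
  rw [msqrt_eq_sqrt hA, CFC.sqrt_mul_sqrt_self A hA.nonneg]

lemma posDef_msqrt {A : Matrix n n ℂ} (hA : A.PosDef) : (msqrt A).PosDef := by
  rw [msqrt_eq_sqrt hA.posSemidef]
  exact (IsStrictlyPositive.sqrt A hA.isStrictlyPositive).posDef

lemma posDef_gmean {A B : Matrix n n ℂ} (hA : A.PosDef) (hB : B.PosDef) : (gmean A B).PosDef := by
  have hS := posDef_msqrt hA
  have hC : (msqrt A)⁻¹ * B * (msqrt A)⁻¹ |>.PosDef := by
    simpa only [star_eq_conjTranspose, hS.inv.isHermitian.eq] using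
      (Matrix.IsUnit.posDef_star_left_conjugate_iff hS.inv.isUnit).2 hB
  simpa only [gmean, star_eq_conjTranspose, hS.isHermitian.eq] using
    (Matrix.IsUnit.posDef_star_left_conjugate_iff hS.isUnit).2 (posDef_msqrt hC)

lemma one_le_sqrt_mul_sqrt {s t : ℝ} (hs : 0 ≤ s) (hst : 1 ≤ s * t) : 1 ≤ √s * √t := by
  rwa [← Real.sqrt_mul hs, Real.one_le_sqrt]

lemma one_add_le_sqrt_add_sqrt_mul_sqrt {s t x : ℝ} (hs : 0 ≤ s) (hst : 1 ≤ s * t) (hsx : s ≤ x)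
    (hxt : x ≤ t) : 1 + x ≤ (√s + √t) * √x := by
  have hprod : 0 ≤ (√x - √s) * (√t - √x) :=
    mul_nonneg (sub_nonneg.2 (Real.sqrt_le_sqrt hsx)) (sub_nonneg.2 (Real.sqrt_le_sqrt hxt))
  linarith [one_le_sqrt_mul_sqrt hs hst, Real.mul_self_sqrt (hs.trans hsx)]

lemma one_le_sqrt_add_sqrt_div_two {s t : ℝ} (hs : 0 ≤ s) (hst : 1 ≤ s * t) :
    1 ≤ (√s + √t) / 2 := by
  nlinarith [one_le_sqrt_mul_sqrt hs hst, sq_nonneg (√s - √t), Real.sqrt_nonneg s,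
    Real.sqrt_nonneg t]

lemma one_add_le_smul_msqrt {C : Matrix n n ℂ} (hC : C.IsHermitian) {s t : ℝ} (hs : 0 ≤ s)
    (hst : 1 ≤ s * t) (hsC : s • 1 ≤ C) (hCt : C ≤ t • 1) : 1 + C ≤ (√s + √t) • msqrt C := by
  have hC' := hC.isSelfAdjoint
  have hcont (f : ℝ → ℝ) : ContinuousOn f (spectrum ℝ C) := C.finite_real_spectrum.continuousOn f
  rw [← Algebra.algebraMap_eq_smul_one, algebraMap_le_iff_le_spectrum hC'] at hsC
  rw [← Algebra.algebraMap_eq_smul_one, le_algebraMap_iff_spectrum_le hC'] at hCt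
  calc 1 + C = cfc (fun x => 1 + x) C := by
        rw [cfc_const_add (1 : ℝ) (fun x => x) C, cfc_id' ℝ C, map_one]
    _ ≤ cfc (fun x => (√s + √t) * √x) C :=
        cfc_mono (fun x hx => one_add_le_sqrt_add_sqrt_mul_sqrt hs hst (hsC x hx) (hCt x hx))
          (hcont _) (hcont _)
    _ = (√s + √t) • msqrt C := cfc_const_mul _ _ C (hcont _)

lemma amean_le_smul_gmean {A B : Matrix n n ℂ} (hA : A.PosDef) (hB : B.IsHermitian) {s t : ℝ}
    (hs : 0 ≤ s) (hst : 1 ≤ s * t) (hsA : s • A ≤ B) (htA : B ≤ t • A) :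
    amean A B ≤ ((√s + √t) / 2) • gmean A B := by
  set S := msqrt A
  set C := S⁻¹ * B * S⁻¹ with hC_def
  have hS : S.PosDef := posDef_msqrt hA
  have hSS : S * S = A := msqrt_mul_msqrt hA.posSemidef
  have hdet := S.isUnit_iff_isUnit_det.1 hS.isUnit
  have hSCS : S * C * S = B := by
    rw [hC_def, Matrix.mul_assoc S⁻¹, mul_nonsing_inv_cancel_left S _ hdet,
      nonsing_inv_mul_cancel_right S _ hdet]
  have hSAS : S⁻¹ * A * S⁻¹ = 1 := by
    rw [← hSS, nonsing_inv_mul_cancel_left S _ hdet, mul_nonsing_inv S hdet]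
  have hCh : C.IsHermitian := by
    simpa [hS.inv.isHermitian.eq] using isHermitian_conjTranspose_mul_mul S⁻¹ hB
  have hsC : s • 1 ≤ C := by
    simpa [hS.inv.isHermitian.eq, hSAS] using conjTranspose_mul_mul_le hsA S⁻¹
  have hCt : C ≤ t • 1 := by
    simpa [hS.inv.isHermitian.eq, hSAS] using conjTranspose_mul_mul_le htA S⁻¹
  calc amean A B = (2 : ℝ)⁻¹ • (S * (1 + C) * S) := by
        rw [Matrix.mul_add, Matrix.add_mul, Matrix.mul_one, hSS, hSCS, amean]
    _ ≤ (2 : ℝ)⁻¹ • (S * ((√s + √t) • msqrt C) * S) := by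
        have := conjTranspose_mul_mul_le (one_add_le_smul_msqrt hCh hs hst hsC hCt) S
        rw [hS.isHermitian.eq] at this
        exact smul_le_smul_of_nonneg_left this (by norm_num)
    _ = ((√s + √t) / 2) • gmean A B := by
        rw [Matrix.mul_smul, Matrix.smul_mul, smul_smul, inv_mul_eq_div, gmean]

end GeometricMean

theorem antitone_geom_le_arith {n : Type} [Fintype n] [DecidableEq n]
    (g : ℝ → ℝ) (hg : OpAntitone g)
    (A B : Matrix n n ℂ) (hA : A.PosDef) (hB : B.PosDef)
    (s t : ℝ) (hs : 0 < s) (hst : s ≤ t) (h1 : 1 ≤ s * t)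
    (hsA : LoewnerLE (s • A) B) (htA : LoewnerLE B (t • A)) :
    LoewnerLE ((2 / (Real.sqrt s + Real.sqrt t)) • cfc g (gmean A B))
      ((2 : ℝ)⁻¹ • (cfc g A + cfc g B)) := by
  rw [← inv_div]
  exact hg.inv_smul_cfc_le_amean hA hB (posDef_gmean hA hB)
    (one_le_sqrt_add_sqrt_div_two hs.le h1) (amean_le_smul_gmean hA hB.isHermitian hs.le h1 hsA htA)
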